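/- arXiv:1205.3454 — 2 statements merged into one kernel-verified Lean document; each statement's English description precedes it below -/
import Mathlib

section
/- Let S be an idempotent covered semigroup and let (s,t,α), (u,v,β) ∈ T(S). Then (s,t,α) 𝓡 (u,v,β) in T(S) if and only if t 𝓡 v in S and there exists a ∈ S¹ with s = at and u = av. -/
namespace SemibandEmbed

/-- The two-element right-zero semigroup `R₂ = {σ, τ}`. -/
inductive R2 : Type where
  | σ : R2
  | τ : R2
  deriving DecidableEq

section GreenDefs

variable {S : Type*} [Semigroup S]

/-- Green's relation 𝓡 : `a 𝓡 b` iff `a S¹ = b S¹` (inside `S¹ = WithOne S`). -/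
def greenR (a b : S) : Prop :=
  {x : WithOne S | ∃ u : WithOne S, x = (a : WithOne S) * u} =
    {x : WithOne S | ∃ u : WithOne S, x = (b : WithOne S) * u}

/-- Green's relation 𝓛 : `a 𝓛 b` iff `S¹ a = S¹ b`. -/
def greenL (a b : S) : Prop :=
  {x : WithOne S | ∃ u : WithOne S, x = u * (a : WithOne S)} =
    {x : WithOne S | ∃ u : WithOne S, x = u * (b : WithOne S)}

/-- Green's relation 𝓗 = 𝓛 ∩ 𝓡. -/
def greenH (a b : S) : Prop := greenL a b ∧ greenR a b

/-- Green's relation 𝓓 : `a 𝓓 b` iff `a 𝓡 c` and `c 𝓛 b` for some `c`. -/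
def greenD (a b : S) : Prop := ∃ c : S, greenR a c ∧ greenL c b

/-- Green's relation 𝓙 : `a 𝓙 b` iff `S¹ a S¹ = S¹ b S¹`. -/
def greenJ (a b : S) : Prop :=
  {x : WithOne S | ∃ u v : WithOne S, x = u * (a : WithOne S) * v} =
    {x : WithOne S | ∃ u v : WithOne S, x = u * (b : WithOne S) * v}

/-- Mitsch's natural partial order on a semigroup. -/
def natLe (a b : S) : Prop := ∃ x y : S, a = x * b ∧ a = b * y ∧ a = a * y

end GreenDefs

/-- A semigroup is idempotent covered if every element `s` satisfies `s e = s = f s`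
for some idempotents `e`, `f`. -/
def IdemCovered (S : Type*) [Semigroup S] : Prop :=
  ∀ s : S, ∃ e f : S, IsIdempotentElem e ∧ IsIdempotentElem f ∧ s * e = s ∧ f * s = s

/-- A semigroup is regular if every `a` satisfies `a x a = a` for some `x`. -/
def IsRegularSemigroup (S : Type*) [Semigroup S] : Prop :=
  ∀ a : S, ∃ x : S, a * x * a = a

/-- A semigroup is periodic if every element generates a finite monogenic subsemigroup,
i.e. `aᵐ = aⁿ` for some `0 < m < n` (powers computed in `S¹ = WithOne S`). -/
def IsPeriodic (S : Type*) [Semigroup S] : Prop :=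
  ∀ a : S, ∃ m n : ℕ, 0 < m ∧ m < n ∧ (a : WithOne S) ^ m = (a : WithOne S) ^ n

/-- `𝓗` is a left congruence. -/
def IsLeftCongH (S : Type*) [Semigroup S] : Prop :=
  ∀ a b c : S, greenH a b → greenH (c * a) (c * b)

/-- `𝓗` is a right congruence. -/
def IsRightCongH (S : Type*) [Semigroup S] : Prop :=
  ∀ a b c : S, greenH a b → greenH (a * c) (b * c)

/-- A semigroup is completely regular if every element is 𝓗-related to an idempotent. -/
def IsCompletelyRegular (S : Type*) [Semigroup S] : Prop :=
  ∀ a : S, ∃ e : S, IsIdempotentElem e ∧ greenH a e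

section SemidirectProduct

variable {S : Type*} [Semigroup S]

/-- The multiplication of the semidirect product `(S × S) * R₂`:
`(t₁,s₁,σ)·(t₂,s₂,α) = (t₁s₂, s₁s₂, α)` and `(t₁,s₁,τ)·(t₂,s₂,α) = (t₁t₂, s₁t₂, α)`. -/
def sdMul (x y : S × S × R2) : S × S × R2 :=
  match x, y with
  | (t₁, s₁, R2.σ), (_, s₂, α) => (t₁ * s₂, s₁ * s₂, α)
  | (t₁, s₁, R2.τ), (t₂, _, α) => (t₁ * t₂, s₁ * t₂, α)

instance : Mul (S × S × R2) := ⟨sdMul⟩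

theorem sdMul_def (x y : S × S × R2) : x * y = sdMul x y := rfl

instance : Semigroup (S × S × R2) where
  mul_assoc x y z := by
    obtain ⟨t₁, s₁, α₁⟩ := x
    obtain ⟨t₂, s₂, α₂⟩ := y
    obtain ⟨t₃, s₃, α₃⟩ := z
    cases α₁ <;> cases α₂ <;> simp [sdMul_def, sdMul, mul_assoc]

/-- The set `E = {(s,t,α) ∈ E(T*R₂) : s ∈ S¹ t}`. -/
def Eset (S : Type*) [Semigroup S] : Set (S × S × R2) :=
  {x | IsIdempotentElem x ∧ ∃ a : WithOne S, (x.1 : WithOne S) = a * (x.2.1 : WithOne S)}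

/-- `T(S)`: the subsemigroup of the semidirect product generated by `E`. -/
def TS (S : Type*) [Semigroup S] : Subsemigroup (S × S × R2) :=
  Subsemigroup.closure (Eset S)

/-- Green's `𝓛` is a right congruence. -/
theorem greenL_mul_right {S : Type*} [Semigroup S] {a b : S} (hab : greenL a b) (c : S) :
    greenL (a * c) (b * c) := by
  have key : ∀ {a b : S}, greenL a b → ∀ x : WithOne S,
      (∃ u : WithOne S, x = u * ((a * c : S) : WithOne S)) →
      (∃ u : WithOne S, x = u * ((b * c : S) : WithOne S)) := by
    intro a b hab x hx
    obtain ⟨u, rfl⟩ := hx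
    have h1 : (u * (a : WithOne S)) ∈
        {x : WithOne S | ∃ u : WithOne S, x = u * (a : WithOne S)} := ⟨u, rfl⟩
    rw [greenL] at hab
    rw [hab] at h1
    obtain ⟨w, hw⟩ := h1
    refine ⟨w, ?_⟩
    rw [WithOne.coe_mul, WithOne.coe_mul, ← mul_assoc, hw, mul_assoc]
  have hab' : greenL b a := hab.symm
  ext x
  exact ⟨key hab x, key hab' x⟩

/-- `R(S) = {(s,t,α) ∈ T(S) : s 𝓛 t}`, a subsemigroup of `T(S)`. -/
def RS (S : Type*) [Semigroup S] : Subsemigroup ↥(TS S) where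
  carrier := {x | greenL (x : S × S × R2).1 (x : S × S × R2).2.1}
  mul_mem' := by
    rintro ⟨⟨s, t, α⟩, hx⟩ ⟨⟨u, v, β⟩, hy⟩ hxs hys
    simp only [Set.mem_setOf_eq] at hxs hys ⊢
    cases α <;> exact greenL_mul_right hxs _

end SemidirectProduct


theorem greenR_iff' {S : Type*} [Semigroup S] (a b : S) :
    greenR a b ↔ (∃ c : WithOne S, (a : WithOne S) = b * c) ∧
      (∃ c : WithOne S, (b : WithOne S) = a * c) := by
  constructor
  · intro h
    constructor
    · have h1 : (a : WithOne S) ∈ {x : WithOne S | ∃ u : WithOne S, x = (a : WithOne S) * u} :=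
        ⟨1, (mul_one _).symm⟩
      rw [greenR] at h
      rw [h] at h1
      exact h1
    · have h1 : (b : WithOne S) ∈ {x : WithOne S | ∃ u : WithOne S, x = (b : WithOne S) * u} :=
        ⟨1, (mul_one _).symm⟩
      rw [greenR] at h
      rw [← h] at h1
      exact h1
  · rintro ⟨⟨c, hc⟩, ⟨d, hd⟩⟩
    ext x
    constructor
    · rintro ⟨w, rfl⟩
      exact ⟨c * w, by rw [hc, mul_assoc]⟩
    · rintro ⟨w, rfl⟩
      exact ⟨d * w, by rw [hd, mul_assoc]⟩

theorem diag_mem_TS {S : Type*} [Semigroup S] (hS : IdemCovered S) (c : S) (α : R2) :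
    ((c, c, α) : S × S × R2) ∈ TS S := by
  obtain ⟨f, e, hf, he, hcf, hec⟩ := hS c
  have hf' : f * f = f := hf
  have he' : e * e = e := he
  have h1 : ((e, e, R2.τ) : S × S × R2) ∈ TS S := by
    refine Subsemigroup.subset_closure ⟨?_, 1, (one_mul _).symm⟩
    simp [IsIdempotentElem, sdMul_def, sdMul, he']
  have h2 : ((c, f, R2.σ) : S × S × R2) ∈ TS S := by
    refine Subsemigroup.subset_closure ⟨?_, (c : WithOne S), ?_⟩
    · simp [IsIdempotentElem, sdMul_def, sdMul, hf', hcf]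
    · change (c : WithOne S) = c * (f : WithOne S)
      rw [← WithOne.coe_mul, hcf]
  have h3 : ((f, f, α) : S × S × R2) ∈ TS S := by
    refine Subsemigroup.subset_closure ⟨?_, 1, (one_mul _).symm⟩
    cases α <;> simp [IsIdempotentElem, sdMul_def, sdMul, hf']
  have h4 := (TS S).mul_mem ((TS S).mul_mem h1 h2) h3
  simpa [sdMul_def, sdMul, hec, hcf] using h4

theorem TS_left {S : Type*} [Semigroup S] (x : S × S × R2) (hx : x ∈ TS S) :
    ∃ a : WithOne S, (x.1 : WithOne S) = a * (x.2.1 : WithOne S) := by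
  induction hx using Subsemigroup.closure_induction with
  | mem x h => exact h.2
  | mul x y _ _ ihx ihy =>
    obtain ⟨s, t, α⟩ := x
    obtain ⟨u, v, β⟩ := y
    obtain ⟨a, ha⟩ := ihx
    simp only at ha
    refine ⟨a, ?_⟩
    cases α <;> simp [sdMul_def, sdMul, ha, mul_assoc]

theorem mul_form {S : Type*} [Semigroup S] {s t u v : S} {α β : R2}
    (hx : ((s, t, α) : S × S × R2) ∈ TS S) (hy : ((u, v, β) : S × S × R2) ∈ TS S)
    (h : ∃ c : WithOne ↥(TS S), ((⟨(s, t, α), hx⟩ : ↥(TS S)) : WithOne ↥(TS S)) =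
      ((⟨(u, v, β), hy⟩ : ↥(TS S)) : WithOne ↥(TS S)) * c) :
    ∃ c : WithOne S, (s : WithOne S) = u * c ∧ (t : WithOne S) = v * c := by
  obtain ⟨c, hc⟩ := h
  induction c using WithOne.recOneCoe with
  | one =>
    rw [mul_one, WithOne.coe_inj, Subtype.mk.injEq] at hc
    simp only [Prod.mk.injEq] at hc
    exact ⟨1, by simp [hc.1], by simp [hc.2.1]⟩
  | coe c =>
    obtain ⟨⟨p, q, γ⟩, hp⟩ := c
    rw [← WithOne.coe_mul, WithOne.coe_inj] at hc
    have hc' : ((s, t, α) : S × S × R2) = (u, v, β) * (p, q, γ) := congrArg Subtype.val hc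
    cases β
    · simp only [sdMul_def, sdMul, Prod.mk.injEq] at hc'
      exact ⟨q, by rw [hc'.1, WithOne.coe_mul], by rw [hc'.2.1, WithOne.coe_mul]⟩
    · simp only [sdMul_def, sdMul, Prod.mk.injEq] at hc'
      exact ⟨p, by rw [hc'.1, WithOne.coe_mul], by rw [hc'.2.1, WithOne.coe_mul]⟩

theorem form_mul {S : Type*} [Semigroup S] (hS : IdemCovered S) {s t u v : S} {α β : R2}
    (hx : ((s, t, α) : S × S × R2) ∈ TS S) (hy : ((u, v, β) : S × S × R2) ∈ TS S)
    (a : WithOne S) (hs : (s : WithOne S) = a * t) (hu : (u : WithOne S) = a * v)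
    (h : ∃ c : WithOne S, (t : WithOne S) = v * c) :
    ∃ c : WithOne ↥(TS S), ((⟨(s, t, α), hx⟩ : ↥(TS S)) : WithOne ↥(TS S)) =
      ((⟨(u, v, β), hy⟩ : ↥(TS S)) : WithOne ↥(TS S)) * c := by
  have h' : ∃ c : S, t = v * c := by
    obtain ⟨c, hc⟩ := h
    induction c using WithOne.recOneCoe with
    | one =>
      obtain ⟨e, -, -, -, he, -⟩ := hS v
      rw [mul_one, WithOne.coe_inj] at hc
      exact ⟨e, by rw [he, hc]⟩
    | coe c =>
      rw [← WithOne.coe_mul, WithOne.coe_inj] at hc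
      exact ⟨c, hc⟩
  obtain ⟨c, hc⟩ := h'
  have hsc : s = u * c := by
    rw [← WithOne.coe_inj, WithOne.coe_mul, hs, hu, hc, WithOne.coe_mul, mul_assoc]
  refine ⟨((⟨(c, c, α), diag_mem_TS hS c α⟩ : ↥(TS S)) : WithOne ↥(TS S)), ?_⟩
  rw [← WithOne.coe_mul, WithOne.coe_inj]
  apply Subtype.ext
  change ((s, t, α) : S × S × R2) = (u, v, β) * (c, c, α)
  cases β <;> simp [sdMul_def, sdMul, hsc, hc]

/-- description of Green's relation 𝓡 on `T(S)`. -/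
theorem statement_7 {S : Type*} [Semigroup S] (hS : IdemCovered S)
    (s t u v : S) (α β : R2)
    (hx : ((s, t, α) : S × S × R2) ∈ TS S) (hy : ((u, v, β) : S × S × R2) ∈ TS S) :
    greenR (⟨(s, t, α), hx⟩ : ↥(TS S)) ⟨(u, v, β), hy⟩ ↔
      greenR t v ∧ ∃ a : WithOne S, (s : WithOne S) = a * (t : WithOne S) ∧
        (u : WithOne S) = a * (v : WithOne S) := by
  rw [greenR_iff', greenR_iff']
  constructor
  · rintro ⟨h1, h2⟩
    obtain ⟨c, hc1, hc2⟩ := mul_form hx hy h1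
    obtain ⟨d, hd1, hd2⟩ := mul_form hy hx h2
    obtain ⟨a, ha⟩ := TS_left _ hy
    simp only at ha
    exact ⟨⟨⟨c, hc2⟩, ⟨d, hd2⟩⟩, a, by rw [hc1, hc2, ha, mul_assoc], ha⟩
  · rintro ⟨⟨h1, h2⟩, a, hs, hu⟩
    exact ⟨form_mul hS hx hy a hs hu h1, form_mul hS hy hx a hu hs h2⟩

end SemibandEmbed
end

section
/- Let S be an idempotent covered semigroup. If e = (s,t,σ) is an idempotent of T(S), then the map H_e → H_t sending (s₁,t₁,σ) to t₁ is a group isomorphism from the maximal subgroup H_e of T(S) onto the maximal subgroup H_t of S. If e = (s,t,τ) is an idempotent of T(S), then the map H_e → H_s sending (s₁,t₁,τ) to s₁ is a group isomorphism from the maximal subgroup H_e of T(S) onto the maximal subgroup H_s of S. -/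
namespace SemibandEmbed

theorem greenR_iff_aux {S : Type*} [Semigroup S] {a e : S} (he : e * e = e) :
    greenR a e ↔ e * a = a ∧ ∃ v : S, a * v = e := by
  constructor
  · intro h
    have h1 : (a : WithOne S) ∈ {x : WithOne S | ∃ u : WithOne S, x = (e : WithOne S) * u} := by
      rw [← h]; exact ⟨1, by simp⟩
    have h2 : (e : WithOne S) ∈ {x : WithOne S | ∃ u : WithOne S, x = (a : WithOne S) * u} := by
      rw [h]; exact ⟨1, by simp⟩
    obtain ⟨u, hu⟩ := h1
    obtain ⟨v, hv⟩ := h2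
    constructor
    · apply WithOne.coe_injective
      rw [WithOne.coe_mul, hu, ← mul_assoc, ← WithOne.coe_mul, he]
    · cases v with
      | one =>
        rw [mul_one] at hv
        have := WithOne.coe_injective hv
        subst this
        exact ⟨_, he⟩
      | coe v =>
        rw [← WithOne.coe_mul] at hv
        exact ⟨v, (WithOne.coe_injective hv).symm⟩
  · rintro ⟨h1, v, h2⟩
    ext x
    constructor
    · rintro ⟨u, rfl⟩
      exact ⟨a * u, by rw [← mul_assoc, ← WithOne.coe_mul, h1]⟩
    · rintro ⟨u, rfl⟩
      exact ⟨v * u, by rw [← mul_assoc, ← WithOne.coe_mul, h2]⟩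

theorem greenL_iff_aux {S : Type*} [Semigroup S] {a e : S} (he : e * e = e) :
    greenL a e ↔ a * e = a ∧ ∃ v : S, v * a = e := by
  constructor
  · intro h
    have h1 : (a : WithOne S) ∈ {x : WithOne S | ∃ u : WithOne S, x = u * (e : WithOne S)} := by
      rw [← h]; exact ⟨1, by simp⟩
    have h2 : (e : WithOne S) ∈ {x : WithOne S | ∃ u : WithOne S, x = u * (a : WithOne S)} := by
      rw [h]; exact ⟨1, by simp⟩
    obtain ⟨u, hu⟩ := h1
    obtain ⟨v, hv⟩ := h2
    constructor
    · apply WithOne.coe_injective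
      rw [WithOne.coe_mul, hu, mul_assoc, ← WithOne.coe_mul, he]
    · cases v with
      | one =>
        rw [one_mul] at hv
        have := WithOne.coe_injective hv
        subst this
        exact ⟨_, he⟩
      | coe v =>
        rw [← WithOne.coe_mul] at hv
        exact ⟨v, (WithOne.coe_injective hv).symm⟩
  · rintro ⟨h1, v, h2⟩
    ext x
    constructor
    · rintro ⟨u, rfl⟩
      exact ⟨u * a, by rw [mul_assoc, ← WithOne.coe_mul, h1]⟩
    · rintro ⟨u, rfl⟩
      exact ⟨u * v, by rw [mul_assoc, ← WithOne.coe_mul, h2]⟩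

theorem greenH_iff_aux {S : Type*} [Semigroup S] {a e : S} (he : e * e = e) :
    greenH a e ↔ e * a = a ∧ a * e = a ∧
      ∃ y : S, e * y = y ∧ y * e = y ∧ a * y = e ∧ y * a = e := by
  rw [greenH, greenL_iff_aux he, greenR_iff_aux he]
  constructor
  · rintro ⟨⟨h1, v', h2⟩, h3, v, h4⟩
    refine ⟨h3, h1, e * v * e, ?_, ?_, ?_, ?_⟩
    · rw [← mul_assoc, ← mul_assoc, he]
    · rw [mul_assoc, he]
    · rw [← mul_assoc, ← mul_assoc, h1, h4, he]
    · rw [mul_assoc, h3]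
      calc e * v * a = v' * a * v * a := by rw [h2]
        _ = v' * (a * v * a) := by simp only [mul_assoc]
        _ = e := by rw [h4, h3, h2]
  · rintro ⟨h1, h2, y, -, -, h3, h4⟩
    exact ⟨⟨h2, y, h4⟩, h1, y, h3⟩

theorem sd_sigma {S : Type*} [Semigroup S] (a b c d : S) (α : R2) :
    ((a, b, R2.σ) : S × S × R2) * (c, d, α) = (a * d, b * d, α) := rfl

theorem sd_tau {S : Type*} [Semigroup S] (a b c d : S) (α : R2) :
    ((a, b, R2.τ) : S × S × R2) * (c, d, α) = (a * c, b * c, α) := rfl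

theorem diag_mem {S : Type*} [Semigroup S] (hS : IdemCovered S) (w : S) (α : R2) :
    ((w, w, α) : S × S × R2) ∈ TS S := by
  obtain ⟨f, g, hf, hg, hwf, hgw⟩ := hS w
  have h1 : ((w, f, R2.σ) : S × S × R2) ∈ TS S := by
    apply Subsemigroup.subset_closure
    refine ⟨?_, (w : WithOne S), ?_⟩
    · show _ * _ = _
      rw [sd_sigma, hwf, hf.eq]
    · show (w : WithOne S) = w * f
      rw [← WithOne.coe_mul, hwf]
  have h2 : ∀ k : S, IsIdempotentElem k → ((k, k, R2.τ) : S × S × R2) ∈ TS S := by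
    intro k hk
    apply Subsemigroup.subset_closure
    refine ⟨?_, 1, ?_⟩
    · show _ * _ = _
      rw [sd_tau, hk.eq]
    · simp
  have h3 : ((w, w, R2.σ) : S × S × R2) ∈ TS S := by
    have := (TS S).mul_mem (h2 g hg) h1
    rwa [sd_tau, hgw] at this
  cases α with
  | σ => exact h3
  | τ =>
    have := (TS S).mul_mem h3 (h2 f hf)
    rwa [sd_sigma, hwf] at this

/-- the maximal subgroups of `T(S)` are isomorphic to maximal subgroups of `S`:
if `e = (s,t,σ)` is an idempotent of `T(S)`, the second projection is a multiplication
preserving bijection from the 𝓗-class `H_e` of `T(S)` onto the 𝓗-class `H_t` of `S`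
(i.e. a group isomorphism between the maximal subgroups); if `e = (s,t,τ)`, the first
projection is such a bijection from `H_e` onto `H_s`. -/
theorem statement_13 {S : Type*} [Semigroup S] (hS : IdemCovered S)
    (s t : S) (e : ↥(TS S)) (he : IsIdempotentElem e) :
    ((e : S × S × R2) = (s, t, R2.σ) →
      (∀ x : ↥(TS S), greenH x e → greenH ((x : S × S × R2).2.1) t) ∧
      (∀ x y : ↥(TS S), greenH x e → greenH y e →
        ((x * y : ↥(TS S)) : S × S × R2).2.1 = (x : S × S × R2).2.1 * (y : S × S × R2).2.1) ∧
      Set.InjOn (fun x : ↥(TS S) => (x : S × S × R2).2.1) {x : ↥(TS S) | greenH x e} ∧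
      Set.SurjOn (fun x : ↥(TS S) => (x : S × S × R2).2.1) {x : ↥(TS S) | greenH x e}
        {w : S | greenH w t}) ∧
    ((e : S × S × R2) = (s, t, R2.τ) →
      (∀ x : ↥(TS S), greenH x e → greenH ((x : S × S × R2).1) s) ∧
      (∀ x y : ↥(TS S), greenH x e → greenH y e →
        ((x * y : ↥(TS S)) : S × S × R2).1 = (x : S × S × R2).1 * (y : S × S × R2).1) ∧
      Set.InjOn (fun x : ↥(TS S) => (x : S × S × R2).1) {x : ↥(TS S) | greenH x e} ∧
      Set.SurjOn (fun x : ↥(TS S) => (x : S × S × R2).1) {x : ↥(TS S) | greenH x e}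
        {w : S | greenH w s}) := by
  have he' : e * e = e := he
  obtain ⟨e, hmem⟩ := e
  constructor
  · intro h
    dsimp only at h
    subst h
    have hp : ((s, t, R2.σ) : S × S × R2) * (s, t, R2.σ) = (s, t, R2.σ) :=
      congrArg Subtype.val he'
    rw [sd_sigma] at hp
    simp only [Prod.mk.injEq, and_true] at hp
    obtain ⟨hst, htt⟩ := hp
    have shape : ∀ x : ↥(TS S), (⟨(s, t, R2.σ), hmem⟩ : ↥(TS S)) * x = x →
        x * ⟨(s, t, R2.σ), hmem⟩ = x → ∃ b : S, (x : S × S × R2) = (s * b, b, R2.σ) ∧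
          t * b = b ∧ b * t = b := by
      rintro ⟨⟨a, b, α⟩, hx⟩ h1 h2
      have h1 := congrArg Subtype.val h1
      have h2 := congrArg Subtype.val h2
      change ((s, t, R2.σ) : S × S × R2) * (a, b, α) = (a, b, α) at h1
      change ((a, b, α) : S × S × R2) * (s, t, R2.σ) = (a, b, α) at h2
      cases α
      · simp only [sd_sigma, Prod.mk.injEq, and_true] at h1 h2
        exact ⟨b, by simp [h1.1], h1.2, h2.2⟩
      · simp [sd_tau] at h2
    refine ⟨?_, ?_, ?_, ?_⟩
    · intro x hx
      obtain ⟨h1, h2, y, h3, h4, h5, h6⟩ := (greenH_iff_aux he').1 hx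
      obtain ⟨b, hb, hb1, hb2⟩ := shape x h1 h2
      obtain ⟨c, hc, hc1, hc2⟩ := shape y h3 h4
      have h5 := congrArg Subtype.val h5
      have h6 := congrArg Subtype.val h6
      rw [MulMemClass.coe_mul, hb, hc, sd_sigma] at h5 h6
      simp only [Prod.mk.injEq, and_true] at h5 h6
      rw [hb]
      exact (greenH_iff_aux htt).2 ⟨hb1, hb2, c, hc1, hc2, h5.2, h6.2⟩
    · intro x y hx hy
      obtain ⟨h1, h2, -⟩ := (greenH_iff_aux he').1 hx
      obtain ⟨h3, h4, -⟩ := (greenH_iff_aux he').1 hy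
      obtain ⟨b, hb, -⟩ := shape x h1 h2
      obtain ⟨c, hc, -⟩ := shape y h3 h4
      rw [MulMemClass.coe_mul, hb, hc, sd_sigma]
    · intro x hx y hy hxy
      obtain ⟨h1, h2, -⟩ := (greenH_iff_aux he').1 hx
      obtain ⟨h3, h4, -⟩ := (greenH_iff_aux he').1 hy
      obtain ⟨b, hb, -⟩ := shape x h1 h2
      obtain ⟨c, hc, -⟩ := shape y h3 h4
      simp only [hb, hc] at hxy
      apply Subtype.ext
      rw [hb, hc, hxy]
    · intro w hw
      obtain ⟨h1, h2, y, h3, h4, h5, h6⟩ := (greenH_iff_aux htt).1 hw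
      have mem : ∀ z : S, t * z = z → ((s * z, z, R2.σ) : S × S × R2) ∈ TS S := by
        intro z hz
        have := (TS S).mul_mem hmem (diag_mem hS z R2.σ)
        rwa [sd_sigma, hz] at this
      refine ⟨⟨_, mem w h1⟩, ?_, rfl⟩
      refine (greenH_iff_aux he').2 ⟨?_, ?_, ⟨_, mem y h3⟩, ?_, ?_, ?_, ?_⟩ <;>
        apply Subtype.ext <;>
        simp only [MulMemClass.coe_mul, sd_sigma, mul_assoc, *]
  · intro h
    dsimp only at h
    subst h
    have hp : ((s, t, R2.τ) : S × S × R2) * (s, t, R2.τ) = (s, t, R2.τ) :=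
      congrArg Subtype.val he'
    rw [sd_tau] at hp
    simp only [Prod.mk.injEq, and_true] at hp
    obtain ⟨hss, hts⟩ := hp
    have shape : ∀ x : ↥(TS S), (⟨(s, t, R2.τ), hmem⟩ : ↥(TS S)) * x = x →
        x * ⟨(s, t, R2.τ), hmem⟩ = x → ∃ b : S, (x : S × S × R2) = (b, t * b, R2.τ) ∧
          s * b = b ∧ b * s = b := by
      rintro ⟨⟨a, b, α⟩, hx⟩ h1 h2
      have h1 := congrArg Subtype.val h1
      have h2 := congrArg Subtype.val h2
      change ((s, t, R2.τ) : S × S × R2) * (a, b, α) = (a, b, α) at h1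
      change ((a, b, α) : S × S × R2) * (s, t, R2.τ) = (a, b, α) at h2
      cases α
      · simp [sd_sigma] at h2
      · simp only [sd_tau, Prod.mk.injEq, and_true] at h1 h2
        exact ⟨a, by simp [h1.2], h1.1, h2.1⟩
    refine ⟨?_, ?_, ?_, ?_⟩
    · intro x hx
      obtain ⟨h1, h2, y, h3, h4, h5, h6⟩ := (greenH_iff_aux he').1 hx
      obtain ⟨b, hb, hb1, hb2⟩ := shape x h1 h2
      obtain ⟨c, hc, hc1, hc2⟩ := shape y h3 h4
      have h5 := congrArg Subtype.val h5
      have h6 := congrArg Subtype.val h6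
      rw [MulMemClass.coe_mul, hb, hc, sd_tau] at h5 h6
      simp only [Prod.mk.injEq, and_true] at h5 h6
      rw [hb]
      exact (greenH_iff_aux hss).2 ⟨hb1, hb2, c, hc1, hc2, h5.1, h6.1⟩
    · intro x y hx hy
      obtain ⟨h1, h2, -⟩ := (greenH_iff_aux he').1 hx
      obtain ⟨h3, h4, -⟩ := (greenH_iff_aux he').1 hy
      obtain ⟨b, hb, -⟩ := shape x h1 h2
      obtain ⟨c, hc, -⟩ := shape y h3 h4
      rw [MulMemClass.coe_mul, hb, hc, sd_tau]
    · intro x hx y hy hxy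
      obtain ⟨h1, h2, -⟩ := (greenH_iff_aux he').1 hx
      obtain ⟨h3, h4, -⟩ := (greenH_iff_aux he').1 hy
      obtain ⟨b, hb, -⟩ := shape x h1 h2
      obtain ⟨c, hc, -⟩ := shape y h3 h4
      simp only [hb, hc] at hxy
      apply Subtype.ext
      rw [hb, hc, hxy]
    · intro w hw
      obtain ⟨h1, h2, y, h3, h4, h5, h6⟩ := (greenH_iff_aux hss).1 hw
      have mem : ∀ z : S, s * z = z → ((z, t * z, R2.τ) : S × S × R2) ∈ TS S := by
        intro z hz
        have := (TS S).mul_mem hmem (diag_mem hS z R2.τ)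
        rwa [sd_tau, hz] at this
      refine ⟨⟨_, mem w h1⟩, ?_, rfl⟩
      refine (greenH_iff_aux he').2 ⟨?_, ?_, ⟨_, mem y h3⟩, ?_, ?_, ?_, ?_⟩ <;>
        apply Subtype.ext <;>
        simp only [MulMemClass.coe_mul, sd_tau, mul_assoc, *]


end SemibandEmbed
end
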